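/- In ℝ³, the eleven vector fields f̃_{α̃,j} = ∇ × (∂_x^γ φ₀ e_k) listed in the divergence-free Hermite table (e.g. f_{(1,1,0),1} = ∇×(φ₀ e₃), f_{(2,1,0),1} = ∇×(∂_{x₁}φ₀ e₃), f_{(1,1,1),1} = ∇×(∂_{x₃}φ₀ e₃), f_{(1,1,1),2} = ∇×(∂_{x₁}φ₀ e₁), etc.) and the polynomial vector fields p_{α̃,j} (e.g. p_{(1,1,0),1} = (-x₂/2, x₁/2, 0)ᵀ, p_{(1,1,1),1} = (x₂x₃,0,0)ᵀ, p_{(1,1,1),2} = (0,0,-x₁x₂)ᵀ, etc.) satisfy the orthonormality relation ⟨p_{α̃,j}, f_{β̃,k}⟩ = δ_{jk} δ_{α̃β̃}, where ⟨u,v⟩ = ∫_{ℝ³} u·v dx. -/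

import Mathlib

open MeasureTheory Real
open scoped ENNReal

noncomputable section

/-- Directional partial derivative in the `i`-th coordinate direction. -/
def pd (i : Fin 3) (f : EuclideanSpace ℝ (Fin 3) → ℝ) :
    EuclideanSpace ℝ (Fin 3) → ℝ :=
  fun x => fderiv ℝ f x (EuclideanSpace.single i 1)

/-- A vector in ℝ³ from its three components. -/
def vec3 (a b c : ℝ) : EuclideanSpace ℝ (Fin 3) :=
  (WithLp.equiv 2 (Fin 3 → ℝ)).symm ![a, b, c]

/-- The curl of a vector field on ℝ³. -/
def curl3 (v : EuclideanSpace ℝ (Fin 3) → EuclideanSpace ℝ (Fin 3))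
    (x : EuclideanSpace ℝ (Fin 3)) : EuclideanSpace ℝ (Fin 3) :=
  vec3 (pd 1 (fun y => v y 2) x - pd 2 (fun y => v y 1) x)
       (pd 2 (fun y => v y 0) x - pd 0 (fun y => v y 2) x)
       (pd 0 (fun y => v y 1) x - pd 1 (fun y => v y 0) x)

/-- The Gaussian `φ₀(x) = (4π)^{-3/2} e^{-|x|²/4}` on ℝ³. -/
def phi3 (x : EuclideanSpace ℝ (Fin 3)) : ℝ :=
  (4 * π) ^ (-(3 : ℝ) / 2) * exp (-‖x‖ ^ 2 / 4)

/-- The eleven polynomial vector fields `p_{α̃,j}` from the divergence-free Hermite table. -/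
def pTab : Fin 11 → EuclideanSpace ℝ (Fin 3) → EuclideanSpace ℝ (Fin 3) :=
  ![fun x => vec3 (-(x 1) / 2) (x 0 / 2) 0,
    fun x => vec3 (x 2 / 2) 0 (-(x 0) / 2),
    fun x => vec3 0 (-(x 2) / 2) (x 1 / 2),
    fun x => vec3 (x 0 * x 1 / 2) (-(x 0) ^ 2 / 4) 0,
    fun x => vec3 ((x 1) ^ 2 / 4) (-(x 0 * x 1) / 2) 0,
    fun x => vec3 (-(x 0 * x 2) / 2) 0 ((x 0) ^ 2 / 4),
    fun x => vec3 (-(x 2) ^ 2 / 4) 0 (x 0 * x 2 / 2),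
    fun x => vec3 0 (x 1 * x 2 / 2) (-(x 1) ^ 2 / 4),
    fun x => vec3 0 ((x 2) ^ 2 / 4) (-(x 1 * x 2) / 2),
    fun x => vec3 (x 1 * x 2) 0 0,
    fun x => vec3 0 0 (-(x 0 * x 1))]

/-- The eleven divergence-free Gaussian vector fields `f_{α̃,j}` from the table. -/
def fTab : Fin 11 → EuclideanSpace ℝ (Fin 3) → EuclideanSpace ℝ (Fin 3) :=
  ![curl3 (fun x => phi3 x • EuclideanSpace.single 2 1),
    curl3 (fun x => phi3 x • EuclideanSpace.single 1 1),
    curl3 (fun x => phi3 x • EuclideanSpace.single 0 1),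
    curl3 (fun x => pd 0 phi3 x • EuclideanSpace.single 2 1),
    curl3 (fun x => pd 1 phi3 x • EuclideanSpace.single 2 1),
    curl3 (fun x => pd 0 phi3 x • EuclideanSpace.single 1 1),
    curl3 (fun x => pd 2 phi3 x • EuclideanSpace.single 1 1),
    curl3 (fun x => pd 1 phi3 x • EuclideanSpace.single 0 1),
    curl3 (fun x => pd 2 phi3 x • EuclideanSpace.single 0 1),
    curl3 (fun x => pd 2 phi3 x • EuclideanSpace.single 2 1),
    curl3 (fun x => pd 0 phi3 x • EuclideanSpace.single 0 1)]

/-- Moments. -/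
def mom : ℕ → ℚ
  | 0 => 1
  | 1 => 0
  | (n + 2) => 2 * (n + 1) * mom n

def hh (n : ℕ) (t : ℝ) : ℝ := t ^ n * exp (-(1 / 4) * t ^ 2)

lemma hh_integrable (n : ℕ) : Integrable (hh n) := by
  have h := integrable_rpow_mul_exp_neg_mul_sq (b := 1 / 4) (by norm_num) (s := (n : ℝ))
    (by have : (0 : ℝ) ≤ n := n.cast_nonneg
        linarith)
  simp only [Real.rpow_natCast] at h
  exact h

lemma hh_deriv (n : ℕ) (t : ℝ) :
    HasDerivAt (hh n) (n * hh (n - 1) t - 1 / 2 * hh (n + 1) t) t := by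
  have h1 : HasDerivAt (fun t : ℝ => -(1 / 4) * t ^ 2) (-(1 / 4) * (2 * t)) t := by
    simpa using (hasDerivAt_pow 2 t).const_mul (-(1 / 4) : ℝ)
  have h := (hasDerivAt_pow n t).mul h1.exp
  refine h.congr_deriv ?_
  simp only [hh, pow_succ]
  ring

lemma hh_integral (n : ℕ) : ∫ t, hh n t = mom n * √(4 * π) := by
  induction n using Nat.twoStepInduction with
  | zero =>
    have := integral_gaussian (1 / 4)
    simp only [hh, pow_zero, one_mul, mom, Rat.cast_one]
    rw [this]
    congr 1
    ring
  | one =>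
    have h := integral_eq_zero_of_hasDerivAt_of_integrable (hh_deriv 0)
      (((hh_integrable _).const_mul _).sub ((hh_integrable _).const_mul _)) (hh_integrable 0)
    rw [integral_sub ((hh_integrable _).const_mul _) ((hh_integrable _).const_mul _),
      integral_const_mul, integral_const_mul] at h
    simp only [mom]
    push_cast at h ⊢
    have e : 0 + 1 = 1 := rfl
    try rw [e] at h
    linarith
  | more n ih _ =>
    have h := integral_eq_zero_of_hasDerivAt_of_integrable (hh_deriv (n + 1))
      (((hh_integrable _).const_mul _).sub ((hh_integrable _).const_mul _)) (hh_integrable (n + 1))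
    rw [integral_sub ((hh_integrable _).const_mul _) ((hh_integrable _).const_mul _),
      integral_const_mul, integral_const_mul] at h
    simp only [mom, Nat.add_sub_cancel] at h ⊢
    rw [ih] at h
    push_cast at h ⊢
    have e : n + 1 + 1 = n + 2 := rfl
    rw [e] at h
    linarith

def WW (e : Fin 3 → ℕ) (x : EuclideanSpace ℝ (Fin 3)) : ℝ :=
  (4 * π) ^ (-(3 : ℝ) / 2) * ∏ i, hh (e i) (x i)

lemma WW_integrable (e : Fin 3 → ℕ) : Integrable (WW e) := by
  have h : Integrable (fun x : Fin 3 → ℝ => ∏ i, hh (e i) (x i)) :=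
    Integrable.fintype_prod (fun i => hh_integrable (e i))
  have h2 := (EuclideanSpace.volume_preserving_symm_measurableEquiv_toLp (Fin 3)).integrable_comp_emb
    (MeasurableEquiv.measurableEmbedding _) (g := fun x : Fin 3 → ℝ => ∏ i, hh (e i) (x i))
  exact (h2.2 h).const_mul _

lemma norm_const : (4 * π) ^ (-(3 : ℝ) / 2) * √(4 * π) ^ 3 = 1 := by
  have hp : (0 : ℝ) < 4 * π := by positivity
  rw [Real.sqrt_eq_rpow, ← Real.rpow_natCast, ← Real.rpow_mul hp.le, ← Real.rpow_add hp]
  norm_num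

lemma WW_integral (e : Fin 3 → ℕ) : ∫ x, WW e x = ((∏ i, mom (e i) : ℚ) : ℝ) := by
  have h2 := (EuclideanSpace.volume_preserving_symm_measurableEquiv_toLp (Fin 3)).integral_comp
    (MeasurableEquiv.measurableEmbedding _) (fun x : Fin 3 → ℝ => ∏ i, hh (e i) (x i))
  have h3 : ∫ x : EuclideanSpace ℝ (Fin 3), ∏ i, hh (e i) (x i)
      = ∫ x : Fin 3 → ℝ, ∏ i, hh (e i) (x i) := h2
  unfold WW
  rw [integral_const_mul, h3,
    integral_fintype_prod_volume_eq_prod (E := fun _ : Fin 3 => ℝ) (fun i => hh (e i))]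
  simp only [hh_integral, Finset.prod_mul_distrib, Finset.prod_const, Finset.card_univ,
    Fintype.card_fin]
  rw [mul_left_comm, norm_const]
  simp

lemma phi3_eq : phi3 = WW 0 := by
  funext x
  simp only [phi3, WW, hh, Pi.zero_apply, pow_zero, one_mul, ← Real.exp_sum,
    EuclideanSpace.norm_sq_eq, Real.norm_eq_abs, sq_abs, Fin.sum_univ_three]
  congr 2
  ring

lemma WW_hasFDerivAt (e : Fin 3 → ℕ) (x : EuclideanSpace ℝ (Fin 3)) :
    DifferentiableAt ℝ (WW e) x ∧ ∀ i, pd i (WW e) x =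
      e i * WW (Function.update e i (e i - 1)) x
        - 1 / 2 * WW (Function.update e i (e i + 1)) x := by
  have h1 : ∀ j ∈ (Finset.univ : Finset (Fin 3)),
      HasFDerivAt (fun y : EuclideanSpace ℝ (Fin 3) => hh (e j) (y j))
      ((e j * hh (e j - 1) (x j) - 1 / 2 * hh (e j + 1) (x j)) •
        (EuclideanSpace.proj j : EuclideanSpace ℝ (Fin 3) →L[ℝ] ℝ)) x := by
    intro j _
    have hp : HasFDerivAt (fun y : EuclideanSpace ℝ (Fin 3) => y j)
        (EuclideanSpace.proj j : EuclideanSpace ℝ (Fin 3) →L[ℝ] ℝ) x :=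
      (EuclideanSpace.proj j : EuclideanSpace ℝ (Fin 3) →L[ℝ] ℝ).hasFDerivAt
    exact HasDerivAt.comp_hasFDerivAt (f := fun y : EuclideanSpace ℝ (Fin 3) => y j) x
      (hh_deriv (e j) (x j)) hp
  have h := (HasFDerivAt.finsetProd h1).const_mul ((4 * π) ^ (-(3 : ℝ) / 2))
  refine ⟨h.differentiableAt, fun i => ?_⟩
  have h' : fderiv ℝ (WW e) x = _ := h.fderiv
  unfold pd
  rw [h']
  have key : ∀ m, WW (Function.update e i m) x = (4 * π) ^ (-(3 : ℝ) / 2) *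
      (hh m (x i) * ∏ j ∈ Finset.univ.erase i, hh (e j) (x j)) := by
    intro m
    unfold WW
    rw [← Finset.mul_prod_erase _ _ (Finset.mem_univ i)]
    congr 2
    · simp
    · refine Finset.prod_congr rfl fun j hj => ?_
      rw [Function.update_of_ne (Finset.ne_of_mem_erase hj)]
  rw [key, key]
  simp only [smul_apply, sum_apply, smul_eq_mul]
  rw [Finset.sum_eq_single i]
  · simp
    ring
  · intro j _ hj
    simp [hj]
  · simp

abbrev LL := List (ℚ × (Fin 3 → ℕ))

def evL (l : LL) (x : EuclideanSpace ℝ (Fin 3)) : ℝ :=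
  (l.map fun t => (t.1 : ℝ) * WW t.2 x).sum

def evP (l : LL) (x : EuclideanSpace ℝ (Fin 3)) : ℝ :=
  (l.map fun t => (t.1 : ℝ) * ∏ i, x i ^ t.2 i).sum

def valL (l : LL) : ℚ := (l.map fun t => t.1 * (mom (t.2 0) * mom (t.2 1) * mom (t.2 2))).sum

def negL (l : LL) : LL := l.map fun t => (-t.1, t.2)

def DL (i : Fin 3) (l : LL) : LL := l.flatMap fun t =>
  [(t.1 * t.2 i, Function.update t.2 i (t.2 i - 1)),
   (-t.1 / 2, Function.update t.2 i (t.2 i + 1))]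

def mulL (p l : LL) : LL := p.flatMap fun s => l.map fun t => (s.1 * t.1, fun i => s.2 i + t.2 i)

lemma evL_nil (x) : evL [] x = 0 := by simp [evL]

lemma evL_cons (a l x) : evL (a :: l) x = a.1 * WW a.2 x + evL l x := by simp [evL]

lemma evL_append (l m x) : evL (l ++ m) x = evL l x + evL m x := by simp [evL]

lemma evL_neg (l x) : evL (negL l) x = - evL l x := by
  induction l with
  | nil => simp [evL, negL]
  | cons a l ih =>
    have : negL (a :: l) = (-a.1, a.2) :: negL l := rfl
    rw [this, evL_cons, evL_cons, ih]
    push_cast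
    ring

lemma evL_diff (l : LL) (x) : DifferentiableAt ℝ (evL l) x ∧
    ∀ i, pd i (evL l) x = evL (DL i l) x := by
  induction l with
  | nil =>
    have : evL [] = fun _ => 0 := funext evL_nil
    rw [this]
    exact ⟨differentiableAt_const _, fun i => by simp [pd, DL, evL]⟩
  | cons a l ih =>
    have : evL (a :: l) = fun x => a.1 * WW a.2 x + evL l x := funext (evL_cons a l)
    rw [this]
    obtain ⟨h1, h2⟩ := WW_hasFDerivAt a.2 x
    have h3 := h1.const_mul (a.1 : ℝ)
    refine ⟨h3.add ih.1, fun i => ?_⟩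
    have e : DL i (a :: l) = (a.1 * a.2 i, Function.update a.2 i (a.2 i - 1)) ::
      (-a.1 / 2, Function.update a.2 i (a.2 i + 1)) :: DL i l := rfl
    rw [e, evL_cons, evL_cons, ← ih.2 i]
    have h2i := h2 i
    unfold pd at h2i ⊢
    rw [fderiv_fun_add h3 ih.1, fderiv_const_mul h1]
    simp only [add_apply, smul_apply, smul_eq_mul]
    rw [h2i]
    push_cast
    ring

lemma pd_evL (i : Fin 3) (l : LL) : pd i (evL l) = evL (DL i l) :=
  funext fun x => (evL_diff l x).2 i

lemma evL_integral (l : LL) : Integrable (evL l) ∧ ∫ x, evL l x = valL l := by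
  induction l with
  | nil =>
    have : evL [] = fun _ => 0 := funext evL_nil
    rw [this]
    simp [valL]
  | cons a l ih =>
    have : evL (a :: l) = fun x => a.1 * WW a.2 x + evL l x := funext (evL_cons a l)
    rw [this]
    have h := (WW_integrable a.2).const_mul (a.1 : ℝ)
    refine ⟨h.add ih.1, ?_⟩
    rw [integral_add h ih.1, ih.2, integral_const_mul, WW_integral, Fin.prod_univ_three]
    simp [valL]

lemma WW_mul (e e' : Fin 3 → ℕ) (x : EuclideanSpace ℝ (Fin 3)) :
    (∏ i, x i ^ e i) * WW e' x = WW (fun i => e i + e' i) x := by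
  simp only [WW, hh, Fin.prod_univ_three, pow_add]
  ring

lemma evL_mul (p l : LL) (x) : evP p x * evL l x = evL (mulL p l) x := by
  induction p with
  | nil => simp [evL, mulL, evP]
  | cons s p ih =>
    have e1 : evP (s :: p) x = s.1 * (∏ i, x i ^ s.2 i) + evP p x := by simp [evP]
    have e2 : mulL (s :: p) l = (l.map fun t => (s.1 * t.1, fun i => s.2 i + t.2 i)) ++ mulL p l :=
      rfl
    rw [e1, e2, evL_append, add_mul, ih]
    congr 1
    clear ih e1 e2
    induction l with
    | nil => simp [evL]
    | cons t l ih =>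
      rw [List.map_cons, evL_cons, evL_cons, ← ih, ← WW_mul]
      push_cast
      ring

def PL : Fin 11 → Fin 3 → LL :=
  ![![[(-1/2, ![0,1,0])], [(1/2, ![1,0,0])], []],
    ![[(1/2, ![0,0,1])], [], [(-1/2, ![1,0,0])]],
    ![[], [(-1/2, ![0,0,1])], [(1/2, ![0,1,0])]],
    ![[(1/2, ![1,1,0])], [(-1/4, ![2,0,0])], []],
    ![[(1/4, ![0,2,0])], [(-1/2, ![1,1,0])], []],
    ![[(-1/2, ![1,0,1])], [], [(1/4, ![2,0,0])]],
    ![[(-1/4, ![0,0,2])], [], [(1/2, ![1,0,1])]],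
    ![[], [(1/2, ![0,1,1])], [(-1/4, ![0,2,0])]],
    ![[], [(1/4, ![0,0,2])], [(-1/2, ![0,1,1])]],
    ![[(1, ![0,1,1])], [], []],
    ![[], [], [(-1, ![1,1,0])]]]

lemma pTab_eq (j : Fin 11) (i : Fin 3) (x) : pTab j x i = evP (PL j i) x := by
  fin_cases j <;> fin_cases i <;>
    simp [pTab, PL, evP, vec3, Fin.prod_univ_three] <;> ring

def oneL : LL := [(1, 0)]

def QL : Fin 11 → LL :=
  ![oneL, oneL, oneL, DL 0 oneL, DL 1 oneL, DL 0 oneL, DL 2 oneL, DL 1 oneL, DL 2 oneL,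
    DL 2 oneL, DL 0 oneL]

def nL : Fin 11 → Fin 3 := ![2, 1, 0, 2, 2, 1, 1, 0, 0, 2, 0]

def VL (k : Fin 11) (i : Fin 3) : LL := if i = nL k then QL k else []

def FL (k : Fin 11) : Fin 3 → LL :=
  ![DL 1 (VL k 2) ++ negL (DL 2 (VL k 1)),
    DL 2 (VL k 0) ++ negL (DL 0 (VL k 2)),
    DL 0 (VL k 1) ++ negL (DL 1 (VL k 0))]

lemma phi3_evL : phi3 = evL oneL := by
  rw [phi3_eq]
  funext x
  simp [evL, oneL]

lemma fTab_curl (k : Fin 11) :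
    fTab k = curl3 (fun x => evL (QL k) x • EuclideanSpace.single (nL k) 1) := by
  unfold fTab
  simp only [phi3_evL, pd_evL]
  fin_cases k <;> rfl

lemma fTab_eq (k : Fin 11) (i : Fin 3) (x) : fTab k x i = evL (FL k i) x := by
  have hv : ∀ i, (fun y => (evL (QL k) y • EuclideanSpace.single (nL k) (1 : ℝ) :
      EuclideanSpace ℝ (Fin 3)) i) = evL (VL k i) := by
    intro i
    funext y
    by_cases h : i = nL k <;> simp [VL, h, evL_nil]
  rw [fTab_curl]
  simp only [curl3, hv, pd_evL]
  fin_cases i <;> simp [vec3, FL, evL_append, evL_neg, sub_eq_add_neg]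

def dotL (j k : Fin 11) : LL :=
  mulL (PL j 0) (FL k 0) ++ mulL (PL j 1) (FL k 1) ++ mulL (PL j 2) (FL k 2)

lemma val_dot : ∀ j k, valL (dotL j k) = if j = k then 1 else 0 := by
  decide +kernel

/-- Orthonormality of the divergence-free Hermite table:
`⟨p_{α̃,j}, f_{β̃,k}⟩ = δ_{jk}δ_{α̃β̃}` with `⟨u,v⟩ = ∫ u·v dx`. -/
theorem divfree_hermite_orthonormality (j k : Fin 11) :
    (∫ x : EuclideanSpace ℝ (Fin 3), ∑ i : Fin 3, pTab j x i * fTab k x i) =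
      if j = k then 1 else 0 := by
  have h : ∀ x : EuclideanSpace ℝ (Fin 3),
      ∑ i : Fin 3, pTab j x i * fTab k x i = evL (dotL j k) x := by
    intro x
    simp only [pTab_eq, fTab_eq, evL_mul, Fin.sum_univ_three, dotL, evL_append]
  simp only [h]
  rw [(evL_integral _).2, val_dot]
  split_ifs <;> simp
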